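/- arXiv:1702.08093 — 4 statements merged into one kernel-verified Lean document; each statement's English description precedes it below -/
import Mathlib

section
/- Let X = ℝ² ∖ {0} with the action of the multiplicative group G = ℝ_{>0} of positive reals by scalar multiplication, λ·A = λA. Then the set S = {(x, ±1/x) : x ∈ ℝ ∖ {0}} ∪ {(0, ±1), (±1, 0)} is a global H-slice of X for the trivial subgroup H = {1}, but S is not a small subset of X, and the corresponding slicing map f_S : X → G is not continuous. -/
open scoped Pointwise

variable (G : Type*) [Group G] [TopologicalSpace G]
variable (X : Type*) [TopologicalSpace X] [MulAction G X]

/-- The transporter `⟨U,V⟩ = {g ∈ G : gU ∩ V ≠ ∅}` from `U` to `V`. -/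
def transporter (U V : Set X) : Set G := {g : G | ((g • U) ∩ V).Nonempty}

/-- `U` is a small subset of `X`: every point of `X` has a neighborhood `V` thin
relative to `U`, i.e. such that the transporter `⟨U,V⟩` has compact closure in `G`. -/
def IsSmallSet (U : Set X) : Prop :=
  ∀ x : X, ∃ V ∈ nhds x, IsCompact (closure (transporter G X U V))

/-- `X` is a proper `G`-space in the sense of Palais:
every point of `X` has a small neighborhood. -/
def IsPalaisProper : Prop := ∀ x : X, ∃ U ∈ nhds x, IsSmallSet G X U

/-- The saturation `G(S) = {gs : g ∈ G, s ∈ S}` of a subset `S ⊆ X`. -/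
def saturation (S : Set X) : Set X := ⋃ g : G, g • S

/-- `S` is an `H`-slice in `X`: `S` is `H`-invariant, closed in its saturation `G(S)`
(expressed as `closure S ∩ G(S) ⊆ S`), `gS ∩ S ≠ ∅` implies `g ∈ H`, and `G(S)` is open. -/
structure IsSlice (H : Subgroup G) (S : Set X) : Prop where
  invariant : ∀ h ∈ H, ∀ s ∈ S, h • s ∈ S
  closed_in_saturation : closure S ∩ saturation G X S ⊆ S
  mem_of_smul_inter : ∀ g : G, ((g • S) ∩ S).Nonempty → g ∈ H
  open_saturation : IsOpen (saturation G X S)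

/-- `S` is a global `H`-slice of `X`: an `H`-slice with `G(S) = X`. -/
def IsGlobalSlice (H : Subgroup G) (S : Set X) : Prop :=
  IsSlice G X H S ∧ saturation G X S = Set.univ

noncomputable section

/-- The multiplicative group `ℝ_{>0}` of positive real numbers. -/
abbrev Rpos : Type := {x : ℝ // 0 < x}

/-- The punctured plane `X = ℝ² ∖ {0}` (with the Euclidean norm). -/
abbrev PlaneX : Type := {p : EuclideanSpace ℝ (Fin 2) // p ≠ 0}

instance : SMul Rpos PlaneX :=
  ⟨fun g p => ⟨(g : ℝ) • (p : EuclideanSpace ℝ (Fin 2)),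
    smul_ne_zero (ne_of_gt g.2) p.2⟩⟩

instance : MulAction Rpos PlaneX where
  one_smul p := Subtype.ext (one_smul ℝ (p : EuclideanSpace ℝ (Fin 2)))
  mul_smul g h p := Subtype.ext (mul_smul (g : ℝ) (h : ℝ) (p : EuclideanSpace ℝ (Fin 2)))

/-- The set `S = {(x, ±1/x) : x ∈ ℝ ∖ {0}} ∪ {(0, ±1), (±1, 0)}` in the punctured
plane. -/
def hyperbolaSlice : Set PlaneX :=
  {p | ((p : EuclideanSpace ℝ (Fin 2)) 0 ≠ 0 ∧
          ((p : EuclideanSpace ℝ (Fin 2)) 1 = 1 / (p : EuclideanSpace ℝ (Fin 2)) 0 ∨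
           (p : EuclideanSpace ℝ (Fin 2)) 1 = -(1 / (p : EuclideanSpace ℝ (Fin 2)) 0))) ∨
       ((p : EuclideanSpace ℝ (Fin 2)) 0 = 0 ∧
          ((p : EuclideanSpace ℝ (Fin 2)) 1 = 1 ∨ (p : EuclideanSpace ℝ (Fin 2)) 1 = -1)) ∨
       ((p : EuclideanSpace ℝ (Fin 2)) 1 = 0 ∧
          ((p : EuclideanSpace ℝ (Fin 2)) 0 = 1 ∨ (p : EuclideanSpace ℝ (Fin 2)) 0 = -1))}

theorem sq_eq_one_iff_aux (a : ℝ) : a ^ 2 = 1 ↔ a = 1 ∨ a = -1 := by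
  rw [← one_pow 2, sq_eq_sq_iff_eq_or_eq_neg, one_pow]

theorem aux_smul_apply (g : Rpos) (p : PlaneX) (i : Fin 2) :
    ((g • p : PlaneX) : EuclideanSpace ℝ (Fin 2)) i
      = (g : ℝ) * (p : EuclideanSpace ℝ (Fin 2)) i := rfl

theorem aux_mem_iff (p : PlaneX) : p ∈ hyperbolaSlice ↔
    (((p : EuclideanSpace ℝ (Fin 2)) 0 * (p : EuclideanSpace ℝ (Fin 2)) 1) ^ 2 = 1 ∨
     ((p : EuclideanSpace ℝ (Fin 2)) 0 = 0 ∧ ((p : EuclideanSpace ℝ (Fin 2)) 1) ^ 2 = 1) ∨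
     ((p : EuclideanSpace ℝ (Fin 2)) 1 = 0 ∧ ((p : EuclideanSpace ℝ (Fin 2)) 0) ^ 2 = 1)) := by
  unfold hyperbolaSlice
  simp only [Set.mem_ofPred_eq]
  generalize (p : EuclideanSpace ℝ (Fin 2)) 0 = x
  generalize (p : EuclideanSpace ℝ (Fin 2)) 1 = y
  rw [sq_eq_one_iff_aux (x * y), sq_eq_one_iff_aux y,
    sq_eq_one_iff_aux x]
  refine or_congr ?_ Iff.rfl
  constructor
  · rintro ⟨hx, h | h⟩
    · left; rw [h]; field_simp
    · right; rw [h]; field_simp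
  · intro h
    have hx : x ≠ 0 := by
      rintro rfl
      norm_num at h
    refine ⟨hx, ?_⟩
    rcases h with h | h
    · left; field_simp; linarith
    · right; field_simp; linarith

theorem aux_continuous_coord (i : Fin 2) :
    Continuous (fun p : PlaneX => (p : EuclideanSpace ℝ (Fin 2)) i) := by
  fun_prop

theorem aux_isClosed : IsClosed hyperbolaSlice := by
  have h0 := aux_continuous_coord 0
  have h1 := aux_continuous_coord 1
  have e : hyperbolaSlice = {p | _} := Set.ext aux_mem_iff
  rw [e]
  exact (isClosed_eq ((h0.mul h1).pow 2) continuous_const).union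
    (((isClosed_eq h0 continuous_const).inter (isClosed_eq (h1.pow 2) continuous_const)).union
    ((isClosed_eq h1 continuous_const).inter (isClosed_eq (h0.pow 2) continuous_const)))

theorem aux_ne (p : PlaneX) : ¬ ((p : EuclideanSpace ℝ (Fin 2)) 0 = 0 ∧
    (p : EuclideanSpace ℝ (Fin 2)) 1 = 0) := by
  rintro ⟨h0, h1⟩
  apply p.2
  ext i
  fin_cases i
  · simpa using h0
  · simpa using h1

theorem aux_unique (g : Rpos) (s : PlaneX) (hs : s ∈ hyperbolaSlice)
    (hgs : g • s ∈ hyperbolaSlice) : g = 1 := by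
  rw [aux_mem_iff] at hs hgs
  simp only [aux_smul_apply] at hgs
  obtain ⟨g, hg⟩ := g
  apply Subtype.ext
  change g = 1
  simp only at hgs
  generalize (s : EuclideanSpace ℝ (Fin 2)) 0 = x at *
  generalize (s : EuclideanSpace ℝ (Fin 2)) 1 = y at *
  have hg0 : g ≠ 0 := ne_of_gt hg
  rcases hs with hs | ⟨rfl, hs⟩ | ⟨rfl, hs⟩
  · have hx : x ≠ 0 := by rintro rfl; norm_num at hs
    have hy : y ≠ 0 := by rintro rfl; norm_num at hs
    have : g ^ 4 = 1 := by
      simp only [mul_eq_zero, hg0, hx, hy, or_self, false_and, or_false] at hgs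
      calc g ^ 4 = g ^ 4 * (x * y) ^ 2 := by rw [hs, mul_one]
        _ = 1 := by rw [← hgs]; ring
    exact (pow_eq_one_iff_of_nonneg hg.le (by norm_num)).1 this
  · have : g ^ 2 = 1 := by
      rcases hgs with h | ⟨-, h⟩ | ⟨-, h⟩
      · norm_num at h
      · rwa [mul_pow, hs, mul_one] at h
      · norm_num at h
    exact (pow_eq_one_iff_of_nonneg hg.le (by norm_num)).1 this
  · have : g ^ 2 = 1 := by
      rcases hgs with h | ⟨-, h⟩ | ⟨-, h⟩
      · norm_num at h
      · norm_num at h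
      · rwa [mul_pow, hs, mul_one] at h
    exact (pow_eq_one_iff_of_nonneg hg.le (by norm_num)).1 this

theorem aux_exists (p : PlaneX) : ∃ g : Rpos, g⁻¹ • p ∈ hyperbolaSlice := by
  simp only [aux_mem_iff, aux_smul_apply]
  have hne := aux_ne p
  have hinv : ∀ g : Rpos, ((g⁻¹ : Rpos) : ℝ) = (g : ℝ)⁻¹ := fun _ => rfl
  simp only [hinv]
  generalize (p : EuclideanSpace ℝ (Fin 2)) 0 = x at *
  generalize (p : EuclideanSpace ℝ (Fin 2)) 1 = y at *
  by_cases hx : x = 0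
  · have hy : y ≠ 0 := fun h => hne ⟨hx, h⟩
    refine ⟨⟨|y|, abs_pos.2 hy⟩, Or.inr (Or.inl ⟨by simp [hx], ?_⟩)⟩
    rw [mul_pow, inv_pow, sq_abs]
    field_simp
  by_cases hy : y = 0
  · refine ⟨⟨|x|, abs_pos.2 hx⟩, Or.inr (Or.inr ⟨by simp [hy], ?_⟩)⟩
    rw [mul_pow, inv_pow, sq_abs]
    field_simp
  · have hp : 0 < |x * y| := abs_pos.2 (mul_ne_zero hx hy)
    refine ⟨⟨√|x * y|, Real.sqrt_pos.2 hp⟩, Or.inl ?_⟩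
    have h2 : (√|x * y|) ^ 2 = |x * y| := Real.sq_sqrt hp.le
    have h4 : ((√|x * y|) ^ 2) ^ 2 = (x * y) ^ 2 := by rw [h2, sq_abs]
    calc _ = (((√|x * y|) ^ 2) ^ 2)⁻¹ * (x * y) ^ 2 := by
            simp only [← inv_pow]; ring
      _ = 1 := by rw [h4]; field_simp

theorem aux_saturation : saturation Rpos PlaneX hyperbolaSlice = Set.univ := by
  refine Set.eq_univ_of_forall fun p => ?_
  obtain ⟨g, hg⟩ := aux_exists p
  exact Set.mem_iUnion.2 ⟨g, Set.mem_smul_set.2 ⟨_, hg, smul_inv_smul g p⟩⟩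

/-- The point `(1, t)`. -/
def auxPt (t : ℝ) : PlaneX := ⟨!₂[1, t], fun h => by
  have := congrArg (fun v : EuclideanSpace ℝ (Fin 2) => v 0) h
  simp at this⟩

theorem auxPt_continuous : Continuous auxPt := by
  unfold auxPt
  refine Continuous.subtype_mk ?_ _
  refine (PiLp.continuous_toLp 2 _).comp (continuous_pi fun i => ?_)
  fin_cases i
  · exact continuous_const
  · exact continuous_id

theorem auxPt_mem (t : ℝ) (ht : 0 < t) :
    (⟨√t, Real.sqrt_pos.2 ht⟩ : Rpos)⁻¹ • auxPt t ∈ hyperbolaSlice := by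
  rw [aux_mem_iff, aux_smul_apply, aux_smul_apply]
  left
  change ((√t)⁻¹ * 1 * ((√t)⁻¹ * t)) ^ 2 = 1
  have h2 : (√t) ^ 2 = t := Real.sq_sqrt ht.le
  calc _ = (((√t) ^ 2)⁻¹ * t) ^ 2 := by simp only [← inv_pow]; ring
    _ = 1 := by rw [h2]; field_simp

theorem auxPt_zero_mem : auxPt 0 ∈ hyperbolaSlice := by
  rw [aux_mem_iff]
  right; right
  exact ⟨rfl, one_pow 2⟩

theorem aux_not_small : ¬ IsSmallSet Rpos PlaneX hyperbolaSlice := by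
  intro h
  obtain ⟨V, hV, hc⟩ := h (auxPt 0)
  have hK := (hc.image continuous_subtype_val).isClosed
  have h1 : ∀ᶠ t in nhdsWithin (0 : ℝ) (Set.Ioi 0), auxPt t ∈ V :=
    nhdsWithin_le_nhds (auxPt_continuous.continuousAt hV)
  have h3 : Filter.Tendsto (fun t : ℝ => √t) (nhdsWithin 0 (Set.Ioi 0)) (nhds 0) := by
    have := (Real.continuous_sqrt.tendsto 0).mono_left
      (nhdsWithin_le_nhds (s := Set.Ioi (0 : ℝ)))
    rwa [Real.sqrt_zero] at this
  have h0 := hK.mem_of_tendsto h3 (by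
    filter_upwards [h1, self_mem_nhdsWithin] with t htV ht
    refine ⟨⟨√t, Real.sqrt_pos.2 ht⟩, subset_closure ?_, rfl⟩
    exact ⟨auxPt t, Set.mem_smul_set.2 ⟨_, auxPt_mem t ht, smul_inv_smul _ _⟩, htV⟩)
  obtain ⟨g, -, hg⟩ := h0
  exact ne_of_gt g.2 hg

theorem aux_not_continuous (f : PlaneX → Rpos)
    (hf : ∀ (g : Rpos) (s : PlaneX), s ∈ hyperbolaSlice → f (g • s) = g) :
    ¬ Continuous f := by
  intro hc
  have h3 : Filter.Tendsto (fun t : ℝ => √t) (nhdsWithin 0 (Set.Ioi 0)) (nhds 0) := by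
    have := (Real.continuous_sqrt.tendsto 0).mono_left
      (nhdsWithin_le_nhds (s := Set.Ioi (0 : ℝ)))
    rwa [Real.sqrt_zero] at this
  have h4 : Filter.Tendsto (fun t : ℝ => (f (auxPt t) : ℝ)) (nhdsWithin 0 (Set.Ioi 0))
      (nhds (f (auxPt 0) : ℝ)) :=
    ((continuous_subtype_val.comp (hc.comp auxPt_continuous)).tendsto 0).mono_left
      nhdsWithin_le_nhds
  have h5 : (f (auxPt 0) : ℝ) = 0 := by
    refine tendsto_nhds_unique (h4.congr' ?_) h3
    filter_upwards [self_mem_nhdsWithin] with t ht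
    have := hf ⟨√t, Real.sqrt_pos.2 ht⟩ _ (auxPt_mem t ht)
    rw [smul_inv_smul] at this
    rw [this]
  exact ne_of_gt (f (auxPt 0)).2 h5

/-- For the action of `G = ℝ_{>0}` on `X = ℝ² ∖ {0}` by scalar
multiplication, the set `S = {(x, ±1/x)} ∪ {(0, ±1), (±1, 0)}` is a global `H`-slice of
`X` for the trivial subgroup `H = {1}`, but `S` is not a small subset of `X`, and the
corresponding slicing map `f_S : X → G` (determined by `f_S(g • s) = g` for `s ∈ S`)
is not continuous. -/
theorem hyperbola_slice_not_small :
    IsGlobalSlice Rpos PlaneX ⊥ hyperbolaSlice ∧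
    ¬ IsSmallSet Rpos PlaneX hyperbolaSlice ∧
    ∀ f : PlaneX → Rpos,
      (∀ (g : Rpos) (s : PlaneX), s ∈ hyperbolaSlice → f (g • s) = g) →
      ¬ Continuous f := by
  refine ⟨⟨⟨?_, ?_, ?_, ?_⟩, aux_saturation⟩, aux_not_small, aux_not_continuous⟩
  · intro h hh s hs
    rw [Subgroup.mem_bot] at hh
    rwa [hh, one_smul]
  · rw [aux_isClosed.closure_eq]
    exact Set.inter_subset_left
  · rintro g ⟨_, hp, hgs⟩
    obtain ⟨s, hs, rfl⟩ := Set.mem_smul_set.1 hp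
    exact Subgroup.mem_bot.2 (aux_unique g s hs hgs)
  · rw [aux_saturation]
    exact isOpen_univ

end
end

section
/- The set J(n) of all A ∈ 𝓑(n) for which the closed Euclidean unit ball 𝔹ⁿ is the maximal-volume ellipsoid contained in A (equivalently: 𝔹ⁿ ⊆ A and |det g| ≤ 1 for every g ∈ GL(n,ℝ) with g𝔹ⁿ ⊆ A) is a compact subset of 𝓑(n) with respect to the Hausdorff metric. -/
open scoped Pointwise
open TopologicalSpace

noncomputable section

/-- `ℝⁿ` with the Euclidean metric. -/
abbrev Euc (n : ℕ) := EuclideanSpace ℝ (Fin n)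

/-- `𝓑(n)`: the compact convex bodies of `ℝⁿ` symmetric about the origin, viewed inside
the hyperspace of nonempty compact subsets of `ℝⁿ` carrying the Hausdorff metric. -/
def BodySet (n : ℕ) : Set (NonemptyCompacts (Euc n)) :=
  {K | Convex ℝ (K : Set (Euc n)) ∧ (interior (K : Set (Euc n))).Nonempty ∧
       (K : Set (Euc n)) = -(K : Set (Euc n))}

/-- An element of `𝓑(n)`, with the (Hausdorff-metric) subspace topology. -/
abbrev Body (n : ℕ) := ↥(BodySet n)

/-- The underlying subset of `ℝⁿ` of a body `A ∈ 𝓑(n)`. -/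
def Body.toSet {n : ℕ} (A : Body n) : Set (Euc n) :=
  ((A : NonemptyCompacts (Euc n)) : Set (Euc n))

/-- The image `gA` of a subset `A ⊆ ℝⁿ` under the linear map determined by the matrix
`g`; in particular `g𝔹ⁿ` is the ellipsoid associated to `g ∈ GL(n,ℝ)`. -/
def matImage (n : ℕ) (g : Matrix (Fin n) (Fin n) ℝ) (A : Set (Euc n)) : Set (Euc n) :=
  (Matrix.toEuclideanLin g) '' A

/-- The closed Euclidean unit ball `𝔹ⁿ`. -/
def unitBall (n : ℕ) : Set (Euc n) := Metric.closedBall 0 1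

/-- `J(n)`: the bodies `A ∈ 𝓑(n)` for which `𝔹ⁿ` is the maximal-volume ellipsoid
contained in `A`, i.e. `𝔹ⁿ ⊆ A` and `|det g| ≤ 1` for every `g ∈ GL(n,ℝ)` with
`g𝔹ⁿ ⊆ A`. -/
def Jset (n : ℕ) : Set (Body n) :=
  {A | unitBall n ⊆ A.toSet ∧
       ∀ g : GL (Fin n) ℝ,
         matImage n (g : Matrix (Fin n) (Fin n) ℝ) (unitBall n) ⊆ A.toSet →
         |(g : Matrix (Fin n) (Fin n) ℝ).det| ≤ 1}

/-- The determinant bound holds for arbitrary (possibly singular) matrices. -/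
lemma Jset_det_le {n : ℕ} {A : Body n} (hA : A ∈ Jset n) (M : Matrix (Fin n) (Fin n) ℝ)
    (h : ∀ u : Euc n, ‖u‖ ≤ 1 → Matrix.toEuclideanLin M u ∈ A.toSet) : |M.det| ≤ 1 := by
  by_cases hd : M.det = 0
  · simp [hd]
  · refine hA.2 (Matrix.GeneralLinearGroup.mkOfDetNeZero M hd) ?_
    rintro _ ⟨u, hu, rfl⟩
    exact h u (by simpa [unitBall] using hu)

lemma Body_neg_mem {n : ℕ} (A : Body n) {x : Euc n} (hx : x ∈ A.toSet) : -x ∈ A.toSet := by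
  have h := A.2.2.2
  have : x ∈ -A.toSet := by
    unfold Body.toSet
    rw [← h]
    exact hx
  simpa using this

lemma Body_smul_mem {n : ℕ} (A : Body n) {x : Euc n} (hx : x ∈ A.toSet) {s : ℝ}
    (hs : |s| ≤ 1) : s • x ∈ A.toSet := by
  have hc : Convex ℝ A.toSet := A.2.1
  have hs' := abs_le.mp hs
  have := hc hx (Body_neg_mem A hx) (a := (1 + s) / 2) (b := (1 - s) / 2)
    (by linarith) (by linarith) (by ring)
  convert this using 1
  module

/-- Uniform boundedness. -/
lemma Jset_bounded {n : ℕ} {A : Body n} (hA : A ∈ Jset n) :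
    A.toSet ⊆ Metric.closedBall 0 (2 ^ n) := by
  intro x hx
  rw [mem_closedBall_zero_iff]
  by_contra hlt
  push Not at hlt
  have hpos : 0 < ‖x‖ := lt_trans (by positivity) hlt
  set e : Euc n := (‖x‖)⁻¹ • x with he
  have hen : ‖e‖ = 1 := by
    rw [he, norm_smul, norm_inv, norm_norm, inv_mul_cancel₀ hpos.ne']
  set P : Matrix (Fin n) (Fin n) ℝ :=
    1 + Matrix.replicateCol Unit x.ofLp * Matrix.replicateRow Unit e.ofLp with hP
  have hdet : P.det = 1 + ‖x‖ := by
    rw [hP, Matrix.det_one_add_replicateCol_mul_replicateRow]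
    have h1 : e.ofLp ⬝ᵥ x.ofLp = (‖x‖)⁻¹ * (x.ofLp ⬝ᵥ x.ofLp) := by
      rw [he]; simp
    have h2 : x.ofLp ⬝ᵥ x.ofLp = ‖x‖ ^ 2 := by
      rw [EuclideanSpace.real_norm_sq_eq]
      simp [dotProduct, sq]
    rw [h1, h2]
    field_simp
  have hap : ∀ u : Euc n, Matrix.toEuclideanLin ((1 / 2 : ℝ) • P) u =
      (1 / 2 : ℝ) • u + (1 / 2 : ℝ) • ((inner ℝ e u) • x) := by
    intro u
    ext i
    simp [hP, Matrix.toEuclideanLin_apply, Matrix.add_mulVec, Matrix.smul_mulVec,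
      Matrix.mulVec, dotProduct, Matrix.mul_apply, PiLp.inner_apply, Finset.sum_mul, Finset.mul_sum,
      Matrix.one_apply, add_mul, Finset.sum_add_distrib]
    exact Finset.sum_congr rfl fun j _ => by ring
  have hc : Convex ℝ A.toSet := A.2.1
  have key := Jset_det_le hA ((1 / 2 : ℝ) • P) (by
    intro u hu
    rw [hap]
    refine hc (hA.1 (by simpa [unitBall] using hu)) (Body_smul_mem A hx ?_)
      (by norm_num) (by norm_num) (by norm_num)
    calc |inner ℝ e u| ≤ ‖e‖ * ‖u‖ := abs_real_inner_le_norm e u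
      _ ≤ 1 := by rw [hen, one_mul]; exact hu)
  rw [Matrix.det_smul, hdet, Fintype.card_fin, abs_of_nonneg (by positivity)] at key
  have h2 : (0 : ℝ) < 2 ^ n := by positivity
  rw [div_pow, one_pow, div_mul_eq_mul_div, one_mul, div_le_one h2] at key
  linarith

/-- Approximation: points of two nearby compacts are close. -/
lemma close_of_dist_lt {n : ℕ} {K L : NonemptyCompacts (Euc n)} {ε : ℝ} (h : dist K L < ε)
    {x : Euc n} (hx : x ∈ (K : Set (Euc n))) : ∃ y ∈ (L : Set (Euc n)), dist x y < ε :=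
  Metric.exists_dist_lt_of_hausdorffDist_lt hx (h)
    (Metric.hausdorffEDist_ne_top_of_nonempty_of_bounded K.nonempty L.nonempty
      K.isCompact.isBounded L.isCompact.isBounded)

lemma Jset_image_isClosed (n : ℕ) :
    IsClosed ((Subtype.val : Body n → NonemptyCompacts (Euc n)) '' Jset n) := by
  refine isClosed_of_closure_subset fun K hK => ?_
  have happ : ∀ ε > 0, ∃ A ∈ Jset n, (∀ x ∈ (K : Set (Euc n)), ∃ y ∈ A.toSet, dist x y < ε) ∧
      ∀ y ∈ A.toSet, ∃ x ∈ (K : Set (Euc n)), dist y x < ε := by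
    intro ε hε
    obtain ⟨_, ⟨A, hA, rfl⟩, hd⟩ := Metric.mem_closure_iff.mp hK ε hε
    exact ⟨A, hA, fun x hx => close_of_dist_lt hd hx,
      fun y hy => close_of_dist_lt (by rwa [dist_comm] at hd) hy⟩
  have hcl : ∀ x : Euc n, (∀ ε > 0, ∃ y ∈ (K : Set (Euc n)), dist x y < ε) →
      x ∈ (K : Set (Euc n)) := fun x hx => by
    rw [← K.isCompact.isClosed.closure_eq]
    exact Metric.mem_closure_iff.mpr hx
  have hball : unitBall n ⊆ (K : Set (Euc n)) := fun x hx => hcl x fun ε hε => by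
    obtain ⟨A, hA, -, h2⟩ := happ ε hε
    exact h2 x (hA.1 hx)
  have hneg : ∀ x ∈ (K : Set (Euc n)), -x ∈ (K : Set (Euc n)) := fun x hx =>
    hcl _ fun ε hε => by
      obtain ⟨A, hA, h1, h2⟩ := happ (ε / 2) (by positivity)
      obtain ⟨y, hy, hxy⟩ := h1 x hx
      obtain ⟨z, hz, hyz⟩ := h2 _ (Body_neg_mem A hy)
      refine ⟨z, hz, ?_⟩
      have := dist_triangle (-x) (-y) z
      rw [dist_neg_neg] at this
      linarith
  have hconv : Convex ℝ (K : Set (Euc n)) := by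
    intro x hx y hy a b ha hb hab
    refine hcl _ fun ε hε => ?_
    obtain ⟨A, hA, h1, h2⟩ := happ (ε / 2) (by positivity)
    obtain ⟨x', hx', hxx⟩ := h1 x hx
    obtain ⟨y', hy', hyy⟩ := h1 y hy
    have hc : Convex ℝ A.toSet := A.2.1
    obtain ⟨z, hz, hdz⟩ := h2 _ (hc hx' hy' ha hb hab)
    refine ⟨z, hz, ?_⟩
    have t1 := dist_triangle (a • x + b • y) (a • x' + b • y') z
    have t2 := dist_add_add_le (a • x) (b • y) (a • x') (b • y')
    rw [dist_smul₀, dist_smul₀, Real.norm_of_nonneg ha, Real.norm_of_nonneg hb] at t2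
    have t3 := mul_le_mul_of_nonneg_left hxx.le ha
    have t4 := mul_le_mul_of_nonneg_left hyy.le hb
    have t5 : a * (ε / 2) + b * (ε / 2) = ε / 2 := by rw [← add_mul, hab, one_mul]
    linarith
  have hbody : K ∈ BodySet n := by
    refine ⟨hconv, ⟨0, ?_⟩, ?_⟩
    · exact interior_mono hball (Metric.ball_subset_interior_closedBall
        (Metric.mem_ball_self one_pos))
    · ext x
      exact ⟨fun h => by simpa using hneg x h, fun h => by simpa using hneg _ (Set.mem_neg.mp h)⟩
  refine ⟨⟨K, hbody⟩, ⟨hball, fun g hg => ?_⟩, rfl⟩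
  have hest : ∀ ε > (0 : ℝ), |(g : Matrix (Fin n) (Fin n) ℝ).det| ≤ (1 + ε) ^ n := by
    intro ε hε
    obtain ⟨A, hA, h1, -⟩ := happ ε hε
    have hc : Convex ℝ A.toSet := A.2.1
    have hε' : 0 < 1 + ε := by positivity
    have key := Jset_det_le hA ((1 + ε)⁻¹ • (g : Matrix (Fin n) (Fin n) ℝ)) (by
      intro u hu
      have hgu := hg ⟨u, by simpa [unitBall] using hu, rfl⟩
      obtain ⟨y, hy, hd⟩ := h1 _ hgu
      set v := Matrix.toEuclideanLin (g : Matrix (Fin n) (Fin n) ℝ) u with hv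
      have hw : ε⁻¹ • (v - y) ∈ A.toSet := hA.1 (by
        rw [dist_eq_norm] at hd
        simp only [unitBall, mem_closedBall_zero_iff, norm_smul, norm_inv,
          Real.norm_of_nonneg hε.le]
        rw [inv_mul_le_one₀ hε]
        exact hd.le)
      have := hc hy hw (a := (1 + ε)⁻¹) (b := (1 + ε)⁻¹ * ε) (by positivity) (by positivity)
        (by field_simp)
      convert this using 1
      rw [map_smul, LinearMap.smul_apply, ← hv, smul_smul, mul_assoc, mul_inv_cancel₀ hε.ne']
      module)
    rw [Matrix.det_smul, Fintype.card_fin, abs_mul, abs_of_nonneg (by positivity), inv_pow,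
      inv_mul_le_one₀ (by positivity)] at key
    exact key
  have hlim : Filter.Tendsto (fun ε : ℝ => (1 + ε) ^ n) (nhdsWithin 0 (Set.Ioi 0))
      (nhds 1) := by
    have : Continuous fun ε : ℝ => (1 + ε) ^ n := by fun_prop
    have h := this.tendsto 0
    simp only [add_zero, one_pow] at h
    exact h.mono_left nhdsWithin_le_nhds
  exact ge_of_tendsto hlim (by
    filter_upwards [self_mem_nhdsWithin] with ε hε
    exact hest ε hε)

/-- `J(n)` is a compact subset of `𝓑(n)` with respect to the
Hausdorff metric. -/
theorem Jset_isCompact (n : ℕ) : IsCompact (Jset n) := by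
  rw [Subtype.isCompact_iff]
  refine (NonemptyCompacts.isCompact_subsets_of_isCompact
    (isCompact_closedBall (0 : Euc n) (2 ^ n))).of_isClosed_subset (Jset_image_isClosed n) ?_
  rintro _ ⟨A, hA, rfl⟩
  exact Jset_bounded hA

end
end

section
/- The set L(n) of all A ∈ 𝓑(n) for which the closed Euclidean unit ball 𝔹ⁿ is the minimal-volume ellipsoid containing A (equivalently: A ⊆ 𝔹ⁿ and |det g| ≥ 1 for every g ∈ GL(n,ℝ) with A ⊆ g𝔹ⁿ) is a compact subset of 𝓑(n) with respect to the Hausdorff metric. -/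
open scoped Pointwise
open TopologicalSpace

noncomputable section

/-- `L(n)`: the bodies `A ∈ 𝓑(n)` for which `𝔹ⁿ` is the minimal-volume ellipsoid
containing `A`, i.e. `A ⊆ 𝔹ⁿ` and `|det g| ≥ 1` for every `g ∈ GL(n,ℝ)` with
`A ⊆ g𝔹ⁿ`. -/
def Lset (n : ℕ) : Set (Body n) :=
  {A | A.toSet ⊆ unitBall n ∧
       ∀ g : GL (Fin n) ℝ,
         A.toSet ⊆ matImage n (g : Matrix (Fin n) (Fin n) ℝ) (unitBall n) →
         1 ≤ |(g : Matrix (Fin n) (Fin n) ℝ).det|}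

theorem isClosed_convex_aux (n : ℕ) :
    IsClosed {K : NonemptyCompacts (Euc n) | Convex ℝ (K : Set (Euc n))} := by
  have key : {K : NonemptyCompacts (Euc n) | Convex ℝ (K : Set (Euc n))} =
      ⋂ (a : ℝ) (b : ℝ) (_ : 0 ≤ a) (_ : 0 ≤ b) (_ : a + b = 1),
        {K : NonemptyCompacts (Euc n) |
          (K ×ˢ K).map (fun p : Euc n × Euc n => a • p.1 + b • p.2) (by fun_prop) ⊔ K = K} := by
    ext K
    simp only [Set.mem_ofPred_eq, Set.mem_iInter]
    constructor
    · intro h a b ha hb hab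
      apply SetLike.coe_injective
      simp only [NonemptyCompacts.coe_sup, NonemptyCompacts.coe_map, NonemptyCompacts.coe_prod]
      apply Set.union_eq_right.2
      rintro _ ⟨p, ⟨hp1, hp2⟩, rfl⟩
      exact h hp1 hp2 ha hb hab
    · intro h x hx y hy a b ha hb hab
      have := congrArg (fun L : NonemptyCompacts (Euc n) => (L : Set (Euc n)))
        (h a b ha hb hab)
      simp only [NonemptyCompacts.coe_sup, NonemptyCompacts.coe_map,
        NonemptyCompacts.coe_prod] at this
      exact (Set.union_eq_right.1 this) ⟨(x, y), ⟨hx, hy⟩, rfl⟩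
  rw [key]
  refine isClosed_iInter fun a => isClosed_iInter fun b => isClosed_iInter fun _ =>
    isClosed_iInter fun _ => isClosed_iInter fun _ => isClosed_eq ?_ continuous_id
  have hc : Continuous (fun p : Euc n × Euc n => a • p.1 + b • p.2) := by fun_prop
  have h1 : Continuous (fun K : NonemptyCompacts (Euc n) => K ×ˢ K) :=
    NonemptyCompacts.continuous_prod.comp (continuous_id.prodMk continuous_id)
  exact (hc.nonemptyCompacts_map.comp h1).sup continuous_id

theorem isClosed_symm_aux (n : ℕ) :
    IsClosed {K : NonemptyCompacts (Euc n) | (K : Set (Euc n)) = -(K : Set (Euc n))} := by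
  have hc : Continuous (fun x : Euc n => -x) := continuous_neg
  have key : {K : NonemptyCompacts (Euc n) | (K : Set (Euc n)) = -(K : Set (Euc n))} =
      {K | K = K.map (fun x : Euc n => -x) hc} := by
    ext K
    simp only [Set.mem_ofPred_eq]
    rw [← (SetLike.coe_injective (A := NonemptyCompacts (Euc n))).eq_iff,
      NonemptyCompacts.coe_map, Set.image_neg_eq_neg]
  rw [key]
  exact isClosed_eq continuous_id hc.nonemptyCompacts_map

theorem isClosed_min_aux (n : ℕ) :
    IsClosed {K : NonemptyCompacts (Euc n) | ∀ g : GL (Fin n) ℝ,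
         (K : Set (Euc n)) ⊆ matImage n (g : Matrix (Fin n) (Fin n) ℝ) (unitBall n) →
         1 ≤ |(g : Matrix (Fin n) (Fin n) ℝ).det|} := by
  rw [← isOpen_compl_iff, isOpen_iff_forall_mem_open]
  intro K hK
  simp only [Set.mem_compl_iff, Set.mem_ofPred_eq, not_forall, not_le] at hK
  obtain ⟨g, hg, hdet⟩ := hK
  obtain ⟨c, hc1, hc⟩ : ∃ c : ℝ, 1 < c ∧ c ^ n * |(g : Matrix (Fin n) (Fin n) ℝ).det| < 1 := by
    have h1 : Filter.Tendsto (fun c : ℝ => c ^ n * |(g : Matrix (Fin n) (Fin n) ℝ).det|)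
        (nhdsWithin 1 (Set.Ioi 1)) (nhds (1 ^ n * |(g : Matrix (Fin n) (Fin n) ℝ).det|)) :=
      (Continuous.tendsto (by fun_prop) 1).mono_left nhdsWithin_le_nhds
    have h2 := h1.eventually (eventually_lt_nhds (by simpa using hdet))
    have h3 : ∀ᶠ c : ℝ in nhdsWithin 1 (Set.Ioi 1), 1 < c := self_mem_nhdsWithin
    exact (h3.and h2).exists
  have hc0 : 0 < c := by linarith
  have hu : IsUnit (g : Matrix (Fin n) (Fin n) ℝ).det :=
    (Matrix.isUnit_iff_isUnit_det _).1 g.isUnit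
  have hmul : ∀ A B : Matrix (Fin n) (Fin n) ℝ, ∀ x : Euc n,
      Matrix.toEuclideanLin A (Matrix.toEuclideanLin B x) = Matrix.toEuclideanLin (A * B) x := by
    intro A B x
    simp [Matrix.mulVec_mulVec]
  have hone : ∀ x : Euc n,
      Matrix.toEuclideanLin (1 : Matrix (Fin n) (Fin n) ℝ) x = x := by
    intro x
    simp [Matrix.toLpLin_apply]
  set T : Euc n →ₗ[ℝ] Euc n := Matrix.toEuclideanLin ((g : Matrix (Fin n) (Fin n) ℝ)⁻¹) with hT
  have hTc : Continuous T := T.continuous_of_finiteDimensional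
  refine ⟨{L | (L : Set (Euc n)) ⊆ T ⁻¹' Metric.ball 0 c}, ?_,
    NonemptyCompacts.isOpen_subsets_of_isOpen (Metric.isOpen_ball.preimage hTc), ?_⟩
  · intro L hL
    simp only [Set.mem_compl_iff, Set.mem_ofPred_eq, not_forall, not_le]
    have hcu : IsUnit (c • (g : Matrix (Fin n) (Fin n) ℝ)).det := by
      rw [Matrix.det_smul]
      exact (IsUnit.mk0 _ (by positivity)).mul hu
    refine ⟨Matrix.GeneralLinearGroup.mk'' (c • (g : Matrix (Fin n) (Fin n) ℝ)) hcu, ?_, ?_⟩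
    · intro x hx
      have hx' : ‖T x‖ < c := by simpa using hL hx
      refine ⟨c⁻¹ • T x, ?_, ?_⟩
      · simp only [unitBall, mem_closedBall_zero_iff, norm_smul, norm_inv, Real.norm_eq_abs,
          abs_of_pos hc0]
        rw [inv_mul_le_iff₀ hc0]
        linarith
      · change Matrix.toEuclideanLin (c • (g : Matrix (Fin n) (Fin n) ℝ)) (c⁻¹ • T x) = x
        rw [map_smul, map_smul, LinearMap.smul_apply, smul_smul, inv_mul_cancel₀ hc0.ne',
          one_smul, hT, hmul, Matrix.mul_nonsing_inv _ hu, hone]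
    · change |(c • (g : Matrix (Fin n) (Fin n) ℝ)).det| < 1
      rw [Matrix.det_smul, abs_mul, abs_of_pos (by positivity), Fintype.card_fin]
      exact hc
  · intro x hx
    obtain ⟨y, hy, rfl⟩ := hg hx
    have hy' : ‖y‖ ≤ 1 := by simpa [unitBall] using hy
    have : T (Matrix.toEuclideanLin (g : Matrix (Fin n) (Fin n) ℝ) y) = y := by
      rw [hT, hmul, Matrix.nonsing_inv_mul _ hu, hone]
    simp only [Set.mem_preimage, this, mem_ball_zero_iff]
    linarith

theorem interior_aux (n : ℕ) (K : Set (Euc n)) (hne : K.Nonempty) (hconv : Convex ℝ K)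
    (hsymm : K = -K) (hball : K ⊆ unitBall n)
    (hmin : ∀ g : GL (Fin n) ℝ,
         K ⊆ matImage n (g : Matrix (Fin n) (Fin n) ℝ) (unitBall n) →
         1 ≤ |(g : Matrix (Fin n) (Fin n) ℝ).det|) : (interior K).Nonempty := by
  have h0 : (0 : Euc n) ∈ K := by
    obtain ⟨x, hx⟩ := hne
    have hx' : -x ∈ K := by
      rw [hsymm] at hx
      exact hx
    have := hconv hx hx' (a := 1 / 2) (b := 1 / 2) (by norm_num) (by norm_num) (by norm_num)
    simpa using this
  rw [hconv.interior_nonempty_iff_affineSpan_eq_top]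
  by_contra hspan
  have hspan' : Submodule.span ℝ K ≠ ⊤ := by
    intro h
    apply hspan
    rw [← Set.insert_eq_of_mem h0]
    apply SetLike.coe_injective
    rw [affineSpan_insert_zero, h]
    rfl
  have hperp : (Submodule.span ℝ K)ᗮ ≠ ⊥ := by
    intro h
    exact hspan' ((Submodule.orthogonal_eq_bot_iff).1 h)
  obtain ⟨v, hv, hv0⟩ := Submodule.exists_mem_ne_zero_of_ne_bot hperp
  have hvv : (v.ofLp ⬝ᵥ v.ofLp) ≠ 0 := by
    rw [Ne, dotProduct_self_eq_zero]
    intro h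
    exact hv0 (by ext i; simp [h])
  have hdot : ∀ x ∈ K, v.ofLp ⬝ᵥ x.ofLp = 0 := by
    intro x hx
    have := (Submodule.mem_orthogonal _ v).1 hv x (Submodule.subset_span hx)
    rw [EuclideanSpace.inner_eq_star_dotProduct] at this
    simpa using this
  set t : ℝ := -(1 / 2) * (v.ofLp ⬝ᵥ v.ofLp)⁻¹ with ht
  set M : Matrix (Fin n) (Fin n) ℝ :=
    1 + Matrix.replicateCol Unit (t • v.ofLp) * Matrix.replicateRow Unit v.ofLp with hM
  have hdet : M.det = 1 / 2 := by
    rw [hM, Matrix.det_one_add_replicateCol_mul_replicateRow, dotProduct_smul, ht, smul_eq_mul,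
      mul_assoc, inv_mul_cancel₀ hvv]
    norm_num
  have hu : IsUnit M.det := by
    rw [hdet]
    exact IsUnit.mk0 _ (by norm_num)
  have := hmin (Matrix.GeneralLinearGroup.mk'' M hu) (by
    intro x hx
    refine ⟨x, hball hx, ?_⟩
    change Matrix.toEuclideanLin M x = x
    have h1 : M.mulVec x.ofLp = x.ofLp := by
      rw [hM, Matrix.add_mulVec, Matrix.one_mulVec, ← Matrix.mulVec_mulVec]
      have : (Matrix.replicateRow Unit v.ofLp).mulVec x.ofLp = 0 := by
        ext i
        exact hdot x hx
      rw [this, Matrix.mulVec_zero, add_zero]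
    rw [Matrix.toLpLin_apply, h1])
  have h2 : (1 : ℝ) ≤ |M.det| := this
  rw [hdet] at h2
  norm_num [abs_of_pos] at h2

/-- `L(n)` is a compact subset of `𝓑(n)` with respect to the
Hausdorff metric. -/
theorem Lset_isCompact (n : ℕ) : IsCompact (Lset n) := by
  rw [Subtype.isCompact_iff]
  have key : ((↑) : Body n → NonemptyCompacts (Euc n)) '' Lset n =
      {K : NonemptyCompacts (Euc n) | (K : Set (Euc n)) ⊆ unitBall n} ∩
      ({K | Convex ℝ (K : Set (Euc n))} ∩
      ({K | (K : Set (Euc n)) = -(K : Set (Euc n))} ∩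
      {K | ∀ g : GL (Fin n) ℝ,
         (K : Set (Euc n)) ⊆ matImage n (g : Matrix (Fin n) (Fin n) ℝ) (unitBall n) →
         1 ≤ |(g : Matrix (Fin n) (Fin n) ℝ).det|})) := by
    ext K
    constructor
    · rintro ⟨A, hA, rfl⟩
      exact ⟨hA.1, A.2.1, A.2.2.2, hA.2⟩
    · rintro ⟨h1, h2, h3, h4⟩
      exact ⟨⟨K, h2, interior_aux n K K.nonempty h2 h3 h1 h4, h3⟩, ⟨h1, h4⟩, rfl⟩
  rw [key]
  exact (NonemptyCompacts.isCompact_subsets_of_isCompact (isCompact_closedBall 0 1)).inter_right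
    ((isClosed_convex_aux n).inter ((isClosed_symm_aux n).inter (isClosed_min_aux n)))

end
end

section
/- The orbit space 𝓑(n)/GL(n,ℝ) of the natural GL(n,ℝ)-action on 𝓑(n) is homeomorphic to the orbit space J(n)/O(n) of the restricted O(n)-action on J(n); the homeomorphism is induced by the inclusion J(n) ↪ 𝓑(n). -/
open scoped Pointwise
open TopologicalSpace

noncomputable section

/-- The orbit relation of the natural `GL(n,ℝ)`-action `g·A = gA` on `𝓑(n)`;
the quotient `Quot (glOrbitRel n)` is the orbit space `𝓑(n)/GL(n,ℝ)`. -/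
def glOrbitRel (n : ℕ) : Body n → Body n → Prop :=
  fun A B => ∃ g : GL (Fin n) ℝ, matImage n (g : Matrix (Fin n) (Fin n) ℝ) A.toSet = B.toSet

/-- The orbit relation of the restricted `O(n)`-action on `J(n)`;
the quotient `Quot (onOrbitRel n)` is the orbit space `J(n)/O(n)`. -/
def onOrbitRel (n : ℕ) : ↥(Jset n) → ↥(Jset n) → Prop :=
  fun A B => ∃ g ∈ Matrix.orthogonalGroup (Fin n) ℝ,
    matImage n g (A : Body n).toSet = (B : Body n).toSet

section helpers
open Filter Topology Metric
open scoped Matrix.Norms.L2Operator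

variable {n : ℕ}

abbrev Mat (n : ℕ) := Matrix (Fin n) (Fin n) ℝ

lemma norm_lin_le (g : Mat n) (x : Euc n) : ‖Matrix.toEuclideanLin g x‖ ≤ ‖g‖ * ‖x‖ :=
  Matrix.l2_opNorm_mulVec g x

lemma norm_mat_le (g : Mat n) {R : ℝ} (hR : 0 ≤ R)
    (h : ∀ x ∈ unitBall n, ‖Matrix.toEuclideanLin g x‖ ≤ R) : ‖g‖ ≤ R := by
  rw [Matrix.l2_opNorm_def]
  refine ContinuousLinearMap.opNorm_le_of_unit_norm hR fun x hx => ?_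
  exact h x (by simp [unitBall, hx])

lemma lin_mul (g h : Mat n) (x : Euc n) :
    Matrix.toEuclideanLin (g * h) x = Matrix.toEuclideanLin g (Matrix.toEuclideanLin h x) := by
  simp [Matrix.toLpLin_apply]

lemma lin_one (x : Euc n) : Matrix.toEuclideanLin (1 : Mat n) x = x := by
  simp [Matrix.toLpLin_apply]

lemma lin_cont (g : Mat n) : Continuous (Matrix.toEuclideanLin g) :=
  LinearMap.continuous_of_finiteDimensional _

lemma matImage_mul (g h : Mat n) (A : Set (Euc n)) :
    matImage n (g * h) A = matImage n g (matImage n h A) := by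
  ext x; simp [matImage, lin_mul]

lemma matImage_one (A : Set (Euc n)) : matImage n 1 A = A := by
  ext x; simp [matImage, lin_one]

lemma matImage_mono (g : Mat n) {A B : Set (Euc n)} (h : A ⊆ B) :
    matImage n g A ⊆ matImage n g B := Set.image_mono h

lemma matImage_sub (g : Mat n) {A B : Set (Euc n)} :
    matImage n g A ⊆ B ↔ ∀ x ∈ A, Matrix.toEuclideanLin g x ∈ B := by
  simp [matImage, Set.subset_def]

lemma inv_image (g : GL (Fin n) ℝ) (A : Set (Euc n)) :
    matImage n ((g⁻¹ : GL (Fin n) ℝ) : Mat n) (matImage n (g : Mat n) A) = A := by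
  rw [← matImage_mul, ← Units.val_mul, inv_mul_cancel, Units.val_one, matImage_one]

lemma image_inv (g : GL (Fin n) ℝ) (A : Set (Euc n)) :
    matImage n (g : Mat n) (matImage n ((g⁻¹ : GL (Fin n) ℝ) : Mat n) A) = A := by
  rw [← matImage_mul, ← Units.val_mul, mul_inv_cancel, Units.val_one, matImage_one]

lemma orth_ball (g : Mat n) (hg : g ∈ Matrix.orthogonalGroup (Fin n) ℝ) {x : Euc n}
    (hx : x ∈ unitBall n) : Matrix.toEuclideanLin g x ∈ unitBall n := by
  have h := norm_lin_le g x
  have h1 : ‖g‖ ≤ 1 := by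
    rcases isEmpty_or_nonempty (Fin n) with h | h
    · have : g = 0 := Subsingleton.elim _ _
      simp [this]
    · exact (CStarRing.norm_of_mem_unitary hg).le
  simp only [unitBall, mem_closedBall, dist_zero_right] at *
  nlinarith [norm_nonneg x]

lemma Body.isCompact (A : Body n) : IsCompact A.toSet := A.1.isCompact
lemma Body.nonempty (A : Body n) : A.toSet.Nonempty := A.1.nonempty
lemma Body.convex (A : Body n) : Convex ℝ A.toSet := A.2.1
lemma Body.neg_mem (A : Body n) {x : Euc n} (hx : x ∈ A.toSet) : -x ∈ A.toSet := by
  have := A.2.2.2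
  change A.toSet = - A.toSet at this
  rw [this]; simpa using hx

lemma Body.ext {A B : Body n} (h : A.toSet = B.toSet) : A = B :=
  Subtype.ext (NonemptyCompacts.ext h)

lemma Body.exists_ball (A : Body n) : ∃ r > 0, closedBall 0 r ⊆ A.toSet := by
  obtain ⟨x, hx⟩ := A.2.2.1
  obtain ⟨r, hr, h⟩ := Metric.isOpen_iff.1 isOpen_interior x hx
  refine ⟨r / 2, by positivity, fun y hy => ?_⟩
  simp only [mem_closedBall, dist_zero_right] at hy
  have h1 : x + y ∈ A.toSet := interior_subset (h (by simp [mem_ball]; linarith))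
  have h2 : x - y ∈ A.toSet := interior_subset (h (by simp [mem_ball, dist_eq_norm]; linarith))
  have := A.convex h1 (A.neg_mem h2) (a := 1/2) (b := 1/2) (by norm_num) (by norm_num) (by norm_num)
  convert this using 1
  module

lemma Body.exists_bound (A : Body n) : ∃ R > 0, ∀ x ∈ A.toSet, ‖x‖ ≤ R := by
  obtain ⟨R, h⟩ := A.isCompact.isBounded.exists_norm_le
  exact ⟨max R 1, by positivity, fun x hx => (h x hx).trans (le_max_left _ _)⟩

/-- The action of the general linear group on bodies. -/
def Body.act (g : GL (Fin n) ℝ) (A : Body n) : Body n :=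
  ⟨A.1.map (Matrix.toEuclideanLin (g : Mat n)) (lin_cont _), by
    refine ⟨?_, ?_, ?_⟩
    · exact A.convex.linear_image _
    · obtain ⟨r, hr, h⟩ := A.exists_ball
      refine ⟨0, mem_interior.2 ⟨(Matrix.toEuclideanLin ((g⁻¹ : GL (Fin n) ℝ) : Mat n)) ⁻¹' ball 0 r,
        fun x hx => ?_, isOpen_ball.preimage (lin_cont _), by simp [hr]⟩⟩
      refine ⟨Matrix.toEuclideanLin ((g⁻¹ : GL (Fin n) ℝ) : Mat n) x,
        h (ball_subset_closedBall hx), ?_⟩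
      rw [← lin_mul, ← Units.val_mul, mul_inv_cancel, Units.val_one, lin_one]
    · ext x
      constructor
      · rintro ⟨y, hy, rfl⟩
        exact ⟨-y, A.neg_mem hy, by simp⟩
      · rintro ⟨y, hy, h⟩
        exact ⟨-y, A.neg_mem hy, by simp [h]⟩⟩

lemma Body.act_toSet (g : GL (Fin n) ℝ) (A : Body n) :
    (A.act g).toSet = matImage n (g : Mat n) A.toSet := rfl

lemma gl_equiv : Equivalence (glOrbitRel n) where
  refl A := ⟨1, matImage_one _⟩
  symm := by
    rintro A B ⟨g, h⟩
    exact ⟨g⁻¹, by rw [← h, inv_image]⟩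
  trans := by
    rintro A B C ⟨g, h⟩ ⟨k, h'⟩
    exact ⟨k * g, by rw [Units.val_mul, matImage_mul, h, h']⟩

lemma J_det {A : Body n} (hA : A ∈ Jset n) (g : Mat n)
    (h : ∀ x ∈ unitBall n, Matrix.toEuclideanLin g x ∈ A.toSet) : |g.det| ≤ 1 := by
  by_cases h0 : g.det = 0
  · simp [h0]
  · exact hA.2 (Matrix.GeneralLinearGroup.mkOfDetNeZero g h0) (matImage_sub _ |>.2 h)

/-- Uniqueness of the maximal ellipsoid. -/
lemma orth_of_J {A : Body n} (hA : A ∈ Jset n) (g : Mat n)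
    (h : ∀ x ∈ unitBall n, Matrix.toEuclideanLin g x ∈ A.toSet) (hd : |g.det| = 1) :
    g ∈ Matrix.orthogonalGroup (Fin n) ℝ := by
  have hdu : IsUnit g.det := by
    rw [isUnit_iff_ne_zero]; rintro h0; simp [h0] at hd
  have hM : (g * star g).PosDef := by
    refine Matrix.PosDef.mul_conjTranspose_self g ?_
    exact Matrix.vecMul_injective_of_isUnit ((Matrix.isUnit_iff_isUnit_det g).2 hdu)
  have hdM : (g * star g).det = 1 := by
    rw [Matrix.det_mul, Matrix.star_eq_conjTranspose, Matrix.det_conjTranspose, star_trivial,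
      ← abs_mul_abs_self, hd, one_mul]
  set l := hM.1.eigenvalues with hl
  have hpos : ∀ i, 0 < l i := hM.eigenvalues_pos
  have hsp := hM.1.spectral_theorem
  set V : Mat n := (hM.1.eigenvectorUnitary : Mat n) with hV
  have hVm : V ∈ Matrix.orthogonalGroup (Fin n) ℝ := hM.1.eigenvectorUnitary.2
  have hVV : star V * V = 1 := (Unitary.mem_iff.1 hVm).1
  have hVV' : V * star V = 1 := (Unitary.mem_iff.1 hVm).2
  have hsp' : g * star g = V * Matrix.diagonal l * star V := by
    rw [hsp, Unitary.conjStarAlgAut_apply]; rfl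
  set s : Fin n → ℝ := fun i => √(l i)
  have hs : ∀ i, 0 < s i := fun i => Real.sqrt_pos.2 (hpos i)
  set W : Mat n := Matrix.diagonal (fun i => (s i)⁻¹) * star V * g with hW
  have hstarW : star W = star g * V * Matrix.diagonal (fun i => (s i)⁻¹) := by
    simp [hW, Matrix.star_eq_conjTranspose, Matrix.mul_assoc, Matrix.diagonal_conjTranspose]
  have hgW : g * star W = V * Matrix.diagonal s := by
    rw [hstarW, ← mul_assoc, ← mul_assoc, hsp', mul_assoc (V * _), hVV, mul_one, mul_assoc,
      Matrix.diagonal_mul_diagonal]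
    congr 2
    funext i
    have := Real.mul_self_sqrt (hpos i).le
    have := (hs i).ne'
    simp only [s] at *
    field_simp
    linarith
  have hWW : W * star W = 1 := by
    rw [hW, mul_assoc, hgW, mul_assoc, ← mul_assoc (star V), hVV, one_mul,
      Matrix.diagonal_mul_diagonal]
    rw [← Matrix.diagonal_one]
    congr 1
    funext i
    exact inv_mul_cancel₀ (hs i).ne'
  have hWm : star W ∈ Matrix.orthogonalGroup (Fin n) ℝ :=
    Unitary.mem_iff.2 ⟨by simpa using hWW, by simpa using mul_eq_one_comm.1 hWW⟩
  have key := J_det hA ((1/2 : ℝ) • (g * star W) + (1/2 : ℝ) • V) (fun x hx => by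
    have h1 := h _ (orth_ball _ hWm hx)
    have h2 := hA.1 (orth_ball _ hVm hx)
    rw [← lin_mul] at h1
    have := A.convex h1 h2 (a := 1/2) (b := 1/2) (by norm_num) (by norm_num) (by norm_num)
    simpa using this)
  have hE : (1/2 : ℝ) • (g * star W) + (1/2 : ℝ) • V
      = V * Matrix.diagonal (fun i => (s i + 1) / 2) := by
    have : Matrix.diagonal (fun i => (s i + 1) / 2)
        = (1/2 : ℝ) • Matrix.diagonal s + (1/2 : ℝ) • (1 : Mat n) := by
      ext i j
      by_cases hij : i = j
      · subst hij; simp; ring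
      · simp [hij]
    rw [hgW, this]; simp [mul_add]
  have hdV : |V.det| = 1 := by
    have : V.det * V.det = 1 := by
      have := congrArg Matrix.det hVV'
      simpa [Matrix.star_eq_conjTranspose] using this
    rcases mul_self_eq_one_iff.1 this with h | h <;> simp [h]
  rw [hE, Matrix.det_mul, abs_mul, hdV, one_mul, Matrix.det_diagonal,
    abs_of_pos (Finset.prod_pos fun i _ => by have := hs i; positivity)] at key
  have hprodl : ∏ i, l i = 1 := by
    rw [← hdM, hM.1.det_eq_prod_eigenvalues]; rfl
  have hall : ∀ i, s i = 1 := by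
    by_contra hne
    push Not at hne
    obtain ⟨i, hi⟩ := hne
    have hps : ∏ i, s i = 1 := by
      have h0 : 0 < ∏ i, s i := Finset.prod_pos fun i _ => hs i
      have h1 : (∏ i, s i) ^ 2 = 1 := by
        rw [← Finset.prod_pow, ← hprodl]
        exact Finset.prod_congr rfl fun i _ => Real.sq_sqrt (hpos i).le
      nlinarith
    have : ∏ i, s i < ∏ i, ((s i + 1) / 2) ^ 2 := by
      refine Finset.prod_lt_prod (fun i _ => hs i) (fun i _ => ?_) ⟨i, Finset.mem_univ _, ?_⟩
      · nlinarith [sq_nonneg (s i - 1)]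
      · have : s i - 1 ≠ 0 := sub_ne_zero.2 hi
        have : 0 < (s i - 1) ^ 2 := by positivity
        nlinarith
    rw [hps, Finset.prod_pow] at this
    have h0 : 0 < ∏ i, ((s i + 1) / 2) := Finset.prod_pos fun i _ => by have := hs i; positivity
    nlinarith
  have hl1 : l = fun _ => 1 := by
    funext i
    have := Real.sq_sqrt (hpos i).le
    have := hall i
    simp only [s] at this
    nlinarith
  have : g * star g = 1 := by
    rw [hsp', hl1, Matrix.diagonal_one, mul_one, hVV']
  exact Unitary.mem_iff.2 ⟨mul_eq_one_comm.1 this, this⟩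

lemma tendsto_body_iff {F : ℕ → Body n} {A : Body n} :
    Tendsto F atTop (𝓝 A) ↔ ∀ ε > 0, ∀ᶠ k in atTop,
      (∀ x ∈ (F k).toSet, ∃ y ∈ A.toSet, dist x y < ε) ∧
      (∀ x ∈ A.toSet, ∃ y ∈ (F k).toSet, dist x y < ε) := by
  have hd : ∀ k, dist (F k) A = hausdorffDist (F k).toSet A.toSet := fun k => rfl
  have hfin : ∀ k, hausdorffEDist (F k).toSet A.toSet ≠ ⊤ := fun k =>
    hausdorffEDist_ne_top_of_nonempty_of_bounded (F k).nonempty A.nonempty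
      (F k).isCompact.isBounded A.isCompact.isBounded
  rw [Metric.tendsto_nhds]
  constructor
  · intro h ε hε
    filter_upwards [h ε hε] with k hk
    rw [hd] at hk
    refine ⟨fun x hx => exists_dist_lt_of_hausdorffDist_lt hx hk (hfin k), fun x hx => ?_⟩
    obtain ⟨y, hy, h⟩ := exists_dist_lt_of_hausdorffDist_lt' hx hk (hfin k)
    exact ⟨y, hy, by rwa [dist_comm]⟩
  · intro h ε hε
    filter_upwards [h (ε / 2) (by positivity)] with k hk
    rw [hd]
    refine (hausdorffDist_le_of_mem_dist (r := ε / 2) (by positivity) ?_ ?_).trans_lt (by linarith)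
    · intro x hx
      obtain ⟨y, hy, h⟩ := hk.1 x hx
      exact ⟨y, hy, h.le⟩
    · intro x hx
      obtain ⟨y, hy, h⟩ := hk.2 x hx
      exact ⟨y, hy, h.le⟩

lemma exists_J (A : Body n) : ∃ g : GL (Fin n) ℝ, A.act g ∈ Jset n := by
  obtain ⟨r, hr, hrA⟩ := A.exists_ball
  obtain ⟨R, hR, hRA⟩ := A.exists_bound
  let S : Set (Mat n) := {g | ∀ x ∈ unitBall n, Matrix.toEuclideanLin g x ∈ A.toSet}
  have hc : ∀ x : Euc n, Continuous fun g : Mat n => Matrix.toEuclideanLin g x := fun x =>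
    LinearMap.continuous_of_finiteDimensional
      ((LinearMap.applyₗ x).comp (Matrix.toEuclideanLin : Mat n ≃ₗ[ℝ] _).toLinearMap)
  have hcl : IsClosed S := by
    have : S = ⋂ x ∈ unitBall n, (fun g : Mat n => Matrix.toEuclideanLin g x) ⁻¹' A.toSet := by
      ext g; simp [S]
    rw [this]
    exact isClosed_biInter fun x _ => A.isCompact.isClosed.preimage (hc x)
  have : ProperSpace (Mat n) := FiniteDimensional.proper ℝ _
  have hS : IsCompact S := by
    refine (isCompact_closedBall (0 : Mat n) R).of_isClosed_subset hcl fun g hg => ?_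
    rw [mem_closedBall, dist_zero_right]
    exact norm_mat_le g hR.le fun x hx => hRA _ (hg x hx)
  have hrS : r • (1 : Mat n) ∈ S := by
    intro x hx
    apply hrA
    simp only [unitBall, mem_closedBall, dist_zero_right] at hx
    simp [norm_smul, abs_of_pos hr]
    nlinarith
  obtain ⟨g, hg, hmax⟩ := hS.exists_isMaxOn ⟨_, hrS⟩
    (f := fun g : Mat n => |g.det|) (by fun_prop)
  have hgd : 0 < |g.det| := by
    refine lt_of_lt_of_le ?_ (hmax hrS)
    simp [hr.ne', Matrix.det_smul]
    try positivity
  let G := Matrix.GeneralLinearGroup.mkOfDetNeZero g (abs_pos.1 hgd)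
  have hG : (G : Mat n) = g := rfl
  refine ⟨G⁻¹, ?_, ?_⟩
  · rw [Body.act_toSet, ← inv_image G (unitBall n)]
    exact matImage_mono _ (matImage_sub _ |>.2 hg)
  · intro h hh
    rw [Body.act_toSet] at hh
    have h2 := matImage_mono (G : Mat n) hh
    rw [image_inv, ← matImage_mul] at h2
    have h3 := hmax (matImage_sub _ |>.1 h2 : (G : Mat n) * h ∈ S)
    simp only [Set.mem_setOf_eq, hG, Matrix.det_mul, abs_mul] at h3
    by_contra hcon
    push Not at hcon
    nlinarith

lemma J_closed {F : ℕ → Body n} {A : Body n} (hF : ∀ k, F k ∈ Jset n)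
    (h : Tendsto F atTop (𝓝 A)) : A ∈ Jset n := by
  rw [tendsto_body_iff] at h
  constructor
  · intro x hx
    rw [← A.isCompact.isClosed.closure_eq, Metric.mem_closure_iff]
    intro ε hε
    obtain ⟨k, hk⟩ := (h ε hε).exists
    exact hk.1 x ((hF k).1 hx)
  · intro g hg
    rw [matImage_sub] at hg
    have key : ∀ ε > 0, |(g : Mat n).det| ≤ (1 + ε) ^ n := by
      intro ε hε
      obtain ⟨k, hk⟩ := (h ε hε).exists
      have := J_det (hF k) ((1 + ε)⁻¹ • (g : Mat n)) (fun x hx => by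
        obtain ⟨y, hy, hxy⟩ := hk.2 _ (hg x hx)
        set z := Matrix.toEuclideanLin (g : Mat n) x
        have hz : ε⁻¹ • (z - y) ∈ (F k).toSet := by
          apply (hF k).1
          rw [dist_eq_norm] at hxy
          simp only [unitBall, mem_closedBall, dist_zero_right, norm_smul, norm_inv,
            Real.norm_eq_abs, abs_of_pos hε]
          rw [inv_mul_le_iff₀ hε]; linarith
        have := (F k).convex hy hz (a := (1 + ε)⁻¹) (b := (1 + ε)⁻¹ * ε) (by positivity)
          (by positivity) (by field_simp)
        convert this using 1
        rw [smul_smul, mul_assoc, mul_inv_cancel₀ hε.ne', mul_one, ← smul_add]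
        simp [z])
      rw [Matrix.det_smul, abs_mul, Fintype.card_fin, abs_of_pos (by positivity), inv_pow,
        inv_mul_le_iff₀ (by positivity), mul_one] at this
      exact this
    have hl : Tendsto (fun ε : ℝ => (1 + ε) ^ n) (𝓝[>] 0) (𝓝 1) := by
      have : Continuous fun ε : ℝ => (1 + ε) ^ n := by fun_prop
      simpa using (this.tendsto 0).mono_left nhdsWithin_le_nhds
    exact ge_of_tendsto hl (eventually_mem_nhdsWithin.mono fun ε hε => key ε hε)

lemma ball_sub_of_near {A : Body n} {r : ℝ} (hr : 0 < r)
    (h : ∀ x ∈ closedBall (0 : Euc n) (2 * r), ∃ y ∈ A.toSet, dist x y < r) :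
    closedBall 0 r ⊆ A.toSet := by
  intro x hx
  by_contra hxA
  obtain ⟨f, u, hf, hu⟩ := geometric_hahn_banach_closed_point A.convex A.isCompact.isClosed hxA
  rw [mem_closedBall, dist_zero_right] at hx
  obtain ⟨v, rfl⟩ := (InnerProductSpace.toDual ℝ (Euc n)).surjective f
  simp only [InnerProductSpace.toDual_apply_apply] at hf hu
  have hxv : inner ℝ v x ≤ ‖v‖ * r := (real_inner_le_norm v x).trans (by gcongr)
  have hv : v ≠ 0 := by
    rintro rfl
    obtain ⟨a, ha⟩ := A.nonempty
    have := hf a ha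
    simp at this hu
    linarith
  have hv' : 0 < ‖v‖ := norm_pos_iff.2 hv
  obtain ⟨y, hy, hd⟩ := h ((2 * r / ‖v‖) • v) (by
    simp [norm_smul, abs_of_pos hr]
    field_simp
    rfl)
  have h1 := hf y hy
  have h2 : inner ℝ v ((2 * r / ‖v‖) • v - y) ≤ ‖v‖ * r := by
    rw [dist_eq_norm] at hd
    exact (real_inner_le_norm _ _).trans (by gcongr)
  rw [inner_sub_right, inner_smul_right, real_inner_self_eq_norm_sq] at h2
  have h3 : 2 * r / ‖v‖ * ‖v‖ ^ 2 = 2 * (‖v‖ * r) := by field_simp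
  linarith

lemma act_tendsto {F : ℕ → Body n} {A : Body n} (hF : Tendsto F atTop (𝓝 A))
    {g : ℕ → GL (Fin n) ℝ} {G : GL (Fin n) ℝ}
    (hg : Tendsto (fun k => (g k : Mat n)) atTop (𝓝 (G : Mat n))) :
    Tendsto (fun k => (F k).act (g k)) atTop (𝓝 (A.act G)) := by
  rw [tendsto_body_iff] at hF ⊢
  intro ε hε
  obtain ⟨R, hR, hRA⟩ := A.exists_bound
  set c := ‖(G : Mat n)‖ + 1 with hc
  have hc0 : 0 < c := by positivity
  have hg1 : ∀ᶠ k in atTop, ‖(g k : Mat n)‖ < c :=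
    hg.norm.eventually_lt_const (by linarith)
  have hg2 : ∀ᶠ k in atTop, ‖(g k : Mat n) - G‖ < ε / (2 * R) := by
    have := Metric.tendsto_nhds.1 hg (ε / (2 * R)) (by positivity)
    simpa [dist_eq_norm] using this
  filter_upwards [hF (ε / (2 * c)) (by positivity), hg1, hg2] with k hk h1 h2
  have main : ∀ x, ∀ y ∈ A.toSet, dist x y < ε / (2 * c) →
      dist (Matrix.toEuclideanLin (g k : Mat n) x) (Matrix.toEuclideanLin (G : Mat n) y) < ε := by
    intro x y hy hxy
    have e : Matrix.toEuclideanLin (g k : Mat n) x - Matrix.toEuclideanLin (G : Mat n) y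
        = Matrix.toEuclideanLin (g k : Mat n) (x - y)
          + Matrix.toEuclideanLin ((g k : Mat n) - (G : Mat n)) y := by
      simp only [map_sub, LinearMap.sub_apply]; abel
    rw [dist_eq_norm] at hxy ⊢
    rw [e]
    have n1 := norm_lin_le (g k : Mat n) (x - y)
    have n2 := norm_lin_le ((g k : Mat n) - (G : Mat n)) y
    have n3 := hRA y hy
    have m1 : ‖(g k : Mat n)‖ * ‖x - y‖ ≤ c * ‖x - y‖ := by gcongr
    have m2 : c * ‖x - y‖ < ε / 2 := by
      calc _ < c * (ε / (2 * c)) := by gcongr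
        _ = ε / 2 := by field_simp
    have m3 : ‖(g k : Mat n) - G‖ * ‖y‖ ≤ ε / (2 * R) * R := by gcongr
    have m4 : ε / (2 * R) * R = ε / 2 := by field_simp
    have := norm_add_le (Matrix.toEuclideanLin (g k : Mat n) (x - y))
      (Matrix.toEuclideanLin ((g k : Mat n) - (G : Mat n)) y)
    linarith
  constructor
  · rintro _ ⟨x, hx, rfl⟩
    obtain ⟨y, hy, hxy⟩ := hk.1 x hx
    exact ⟨_, ⟨y, hy, rfl⟩, main x y hy hxy⟩
  · rintro _ ⟨y, hy, rfl⟩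
    obtain ⟨x, hx, hxy⟩ := hk.2 y hy
    refine ⟨_, ⟨x, hx, rfl⟩, ?_⟩
    rw [dist_comm]
    exact main x y hy (by rwa [dist_comm])

/-- Key compactness: if `g k • F k → A` with `F k ∈ J(n)`, a subsequence of `F k` converges
to a translate of `A`. -/
lemma key_limit {F : ℕ → Body n} {A : Body n} (hF : ∀ k, F k ∈ Jset n)
    (g : ℕ → GL (Fin n) ℝ) (h : Tendsto (fun k => (F k).act (g k)) atTop (𝓝 A)) :
    ∃ (φ : ℕ → ℕ) (G : GL (Fin n) ℝ), Tendsto (F ∘ φ) atTop (𝓝 (A.act G)) := by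
  obtain ⟨r, hr, hrA⟩ := A.exists_ball
  obtain ⟨R, hR, hRA⟩ := A.exists_bound
  have hb : ∀ᶠ k in atTop, ‖(g k : Mat n)‖ ≤ R + 1 ∧ (r / 2) ^ n ≤ |(g k : Mat n).det| := by
    have h' := tendsto_body_iff.1 h
    filter_upwards [h' 1 one_pos, h' (r / 2) (by positivity)] with k h1 h2
    constructor
    · refine norm_mat_le _ (by positivity) fun x hx => ?_
      obtain ⟨y, hy, hxy⟩ := h1.1 _ ⟨x, (hF k).1 hx, rfl⟩
      have := hRA y hy
      rw [dist_eq_norm] at hxy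
      have h3 := norm_sub_norm_le (Matrix.toEuclideanLin (g k : Mat n) x) y
      linarith
    · have hball : closedBall 0 (r / 2) ⊆ ((F k).act (g k)).toSet :=
        ball_sub_of_near (by positivity) fun x hx => h2.2 x (hrA (by
          rwa [mul_div_cancel₀ _ two_ne_zero] at hx))
      have := J_det (hF k) ((r / 2) • ((g k)⁻¹ : GL (Fin n) ℝ).val) (fun x hx => by
        have hx' : (r / 2) • x ∈ closedBall (0 : Euc n) (r / 2) := by
          simp only [unitBall, mem_closedBall, dist_zero_right] at hx
          simp [norm_smul, abs_of_pos hr]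
          nlinarith
        have h3 := hball hx'
        rw [Body.act_toSet] at h3
        have h4 : Matrix.toEuclideanLin (((g k)⁻¹ : GL (Fin n) ℝ) : Mat n) ((r / 2) • x) ∈
            matImage n (((g k)⁻¹ : GL (Fin n) ℝ) : Mat n) (matImage n (g k : Mat n) (F k).toSet) :=
          ⟨_, h3, rfl⟩
        rw [inv_image] at h4
        simpa using h4)
      have hdet : (((g k)⁻¹ : GL (Fin n) ℝ) : Mat n).det * (g k : Mat n).det = 1 := by
        rw [← Matrix.det_mul, ← Units.val_mul, inv_mul_cancel, Units.val_one, Matrix.det_one]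
      have hdet' := congrArg abs hdet
      rw [abs_mul, abs_one] at hdet'
      rw [Matrix.det_smul, abs_mul, Fintype.card_fin, abs_of_pos (by positivity)] at this
      have h0 := abs_nonneg (g k : Mat n).det
      calc (r / 2) ^ n = ((r / 2) ^ n * |(((g k)⁻¹ : GL (Fin n) ℝ) : Mat n).det|)
              * |(g k : Mat n).det| := by rw [mul_assoc, hdet', mul_one]
        _ ≤ 1 * |(g k : Mat n).det| := by gcongr
        _ = _ := one_mul _
  have : ProperSpace (Mat n) := FiniteDimensional.proper ℝ _
  obtain ⟨M, -, φ, hφ, hM⟩ := (isCompact_closedBall (0 : Mat n) (R + 1)).tendsto_subseq'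
    (x := fun k => (g k : Mat n))
    (hb.frequently.mono fun k hk => by
      rw [mem_closedBall, dist_zero_right]; exact hk.1)
  have hMdet : M.det ≠ 0 := by
    have hc : Continuous fun g : Mat n => |g.det| := by fun_prop
    have h1 := (hc.tendsto M).comp hM
    have h2 : (r / 2) ^ n ≤ |M.det| :=
      ge_of_tendsto h1 ((hφ.tendsto_atTop.eventually hb).mono fun k hk => hk.2)
    have : 0 < (r / 2) ^ n := by positivity
    exact abs_pos.1 (this.trans_le h2)
  let G : GL (Fin n) ℝ := Matrix.GeneralLinearGroup.mkOfDetNeZero M hMdet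
  refine ⟨φ, G⁻¹, ?_⟩
  have hinv : Tendsto (fun k => (((g (φ k))⁻¹ : GL (Fin n) ℝ) : Mat n)) atTop
      (𝓝 ((G⁻¹ : GL (Fin n) ℝ) : Mat n)) := by
    have := (NormedRing.inverse_continuousAt G).tendsto.comp
      (show Tendsto (fun k => (g (φ k) : Mat n)) atTop (𝓝 (G : Mat n)) from hM)
    simpa [Function.comp_def, Ring.inverse_unit] using this
  have := act_tendsto (h.comp hφ.tendsto_atTop) hinv
  refine this.congr fun k => Body.ext ?_
  simp only [Function.comp, Body.act_toSet, inv_image]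

lemma glrel_act (g : GL (Fin n) ℝ) (A : Body n) : glOrbitRel n A (A.act g) := ⟨g, rfl⟩

lemma on_of_gl {A B : ↥(Jset n)} (h : glOrbitRel n A B) : onOrbitRel n A B := by
  obtain ⟨g, hg⟩ := h
  have h1 : matImage n (g : Mat n) (unitBall n) ⊆ (B : Body n).toSet := by
    rw [← hg]; exact matImage_mono _ A.2.1
  have h2 : matImage n ((g⁻¹ : GL (Fin n) ℝ) : Mat n) (unitBall n) ⊆ (A : Body n).toSet := by
    rw [← inv_image g (A : Body n).toSet, hg]; exact matImage_mono _ B.2.1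
  have d1 := B.2.2 g h1
  have d2 := A.2.2 g⁻¹ h2
  have hdet : (((g)⁻¹ : GL (Fin n) ℝ) : Mat n).det * (g : Mat n).det = 1 := by
    rw [← Matrix.det_mul, ← Units.val_mul, inv_mul_cancel, Units.val_one, Matrix.det_one]
  have hdet' := congrArg abs hdet
  rw [abs_mul, abs_one] at hdet'
  have d : |(g : Mat n).det| = 1 := by
    have := abs_nonneg (g : Mat n).det
    apply le_antisymm d1
    nlinarith
  exact ⟨g, orth_of_J B.2 _ (matImage_sub _ |>.1 h1) d, hg⟩

lemma gl_of_on {A B : ↥(Jset n)} (h : onOrbitRel n A B) : glOrbitRel n A B := by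
  obtain ⟨g, hg, h⟩ := h
  have hu := Unitary.mem_iff.1 hg
  exact ⟨⟨g, star g, hu.2, hu.1⟩, h⟩

end helpers

/-- The orbit space `𝓑(n)/GL(n,ℝ)` is homeomorphic to the orbit space
`J(n)/O(n)`, via the homeomorphism induced by the inclusion `J(n) ↪ 𝓑(n)`. -/
theorem orbit_space_homeo_J (n : ℕ) :
    ∃ φ : Quot (onOrbitRel n) ≃ₜ Quot (glOrbitRel n),
      ∀ A : ↥(Jset n), φ (Quot.mk (onOrbitRel n) A) = Quot.mk (glOrbitRel n) (A : Body n) := by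
  let ψ : Quot (onOrbitRel n) → Quot (glOrbitRel n) :=
    Quot.map (fun A : ↥(Jset n) => (A : Body n)) fun _ _ h => gl_of_on h
  have hψ : ∀ A : ↥(Jset n), ψ (Quot.mk _ A) = Quot.mk _ (A : Body n) := fun _ => rfl
  have hcont : Continuous ψ :=
    continuous_quot_lift _ (continuous_quot_mk.comp continuous_subtype_val)
  have hinj : Function.Injective ψ := by
    rintro ⟨A⟩ ⟨B⟩ h
    exact Quot.sound (on_of_gl ((gl_equiv.quot_mk_eq_iff _ _).1 h))
  have hsurj : Function.Surjective ψ := by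
    rintro ⟨A⟩
    obtain ⟨g, hg⟩ := exists_J A
    exact ⟨Quot.mk _ ⟨A.act g, hg⟩, (Quot.sound (glrel_act g A)).symm⟩
  have hclosed : IsClosedMap ψ := by
    intro C hC
    have hC' : IsClosed (Quot.mk (onOrbitRel n) ⁻¹' C) := hC.preimage continuous_quot_mk
    rw [← isQuotientMap_quot_mk.isClosed_preimage]
    apply IsSeqClosed.isClosed
    intro F A hF hFA
    have hex : ∀ k, ∃ S : ↥(Jset n), Quot.mk (onOrbitRel n) S ∈ C ∧
        ∃ g : GL (Fin n) ℝ, (S : Body n).act g = F k := by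
      intro k
      obtain ⟨⟨S⟩, hS, h⟩ := hF k
      obtain ⟨g, hg⟩ := (gl_equiv.quot_mk_eq_iff _ _).1 h
      exact ⟨S, hS, g, Body.ext hg⟩
    choose S hSC g hg using hex
    obtain ⟨φ, G, hlim⟩ := key_limit (F := fun k => (S k : Body n)) (fun k => (S k).2) g
      (by simpa only [hg] using hFA)
    have hJ : A.act G ∈ Jset n := J_closed (fun k => (S (φ k)).2) hlim
    have hlim' : Filter.Tendsto (fun k => S (φ k)) Filter.atTop (nhds ⟨A.act G, hJ⟩) :=
      tendsto_subtype_rng.2 hlim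
    have hmem := hC'.mem_of_tendsto hlim' (Filter.Eventually.of_forall fun k => hSC (φ k))
    exact ⟨_, hmem, (Quot.sound (glrel_act G A)).symm⟩
  exact ⟨(Equiv.ofBijective ψ ⟨hinj, hsurj⟩).toHomeomorphOfContinuousClosed hcont hclosed, hψ⟩

end
end
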